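/- Let 0 < q < 1 and set V := ψ^2(q)/(q ψ^2(q^5)). Then q f^6(-q) f^6(-q^10) / (f^6(-q^2) f^6(-q^5)) = (V-5)/(V(V-1)). -/

import Mathlib

open Real

/-- Ramanujan's theta function `φ(q) = ∑_{n=-∞}^∞ q^(n^2)`. -/
noncomputable def phi (q : ℝ) : ℝ := ∑' n : ℤ, q ^ (n ^ 2)

/-- Ramanujan's theta function `ψ(q) = ∑_{n=0}^∞ q^(n(n+1)/2)`. -/
noncomputable def psi (q : ℝ) : ℝ := ∑' n : ℕ, q ^ (n * (n + 1) / 2)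

/-- `fneg q` is Ramanujan's `f(-q) = ∑_{n=-∞}^∞ (-1)^n q^(n(3n-1)/2)`. -/
noncomputable def fneg (q : ℝ) : ℝ := ∑' n : ℤ, (-1 : ℝ) ^ n * q ^ (n * (3 * n - 1) / 2)

namespace ThetaQuintic

open Filter Topology Finset

/-- The triangular number `n (n + 1) / 2` of an integer. -/
def triangular (n : ℤ) : ℤ := n * (n + 1) / 2

lemma two_mul_triangular (n : ℤ) : 2 * triangular n = n * (n + 1) :=
  Int.two_mul_ediv_two_of_even (Int.even_mul_succ_self n)

lemma triangular_add_one (n : ℤ) : triangular (n + 1) = triangular n + (n + 1) := by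
  have h := two_mul_triangular n
  have h' := two_mul_triangular (n + 1)
  linarith

lemma triangular_neg_add_one (n : ℤ) : triangular (-(n + 1)) = triangular n := by
  have h := two_mul_triangular n
  have h' := two_mul_triangular (-(n + 1))
  linarith

lemma norm_pow_lt_one {q : ℂ} (hq : ‖q‖ < 1) {m : ℕ} (hm : m ≠ 0) : ‖q ^ m‖ < 1 := by
  rw [norm_pow]
  exact pow_lt_one₀ (norm_nonneg q) hq hm

/-- The `q`-Pochhammer symbol `(-x; q)_∞`. -/
noncomputable def qProd (x q : ℂ) : ℂ := ∏' k : ℕ, (1 + x * q ^ k)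

lemma summable_norm_mul_pow {q : ℂ} (hq : ‖q‖ < 1) (x : ℂ) :
    Summable fun k : ℕ ↦ ‖x * q ^ k‖ := by
  simpa using (summable_geometric_of_lt_one (norm_nonneg q) hq).mul_left ‖x‖

lemma tendsto_qProd {q : ℂ} (hq : ‖q‖ < 1) (x : ℂ) :
    Tendsto (fun N ↦ ∏ k ∈ range N, (1 + x * q ^ k)) atTop (𝓝 (qProd x q)) :=
  (multipliable_one_add_of_summable (summable_norm_mul_pow hq x)).hasProd.tendsto_prod_nat

lemma one_add_mul_pow_ne_zero {q x : ℂ} (hq : ‖q‖ < 1) (hx : ‖x‖ < 1) (k : ℕ) :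
    1 + x * q ^ k ≠ 0 := by
  intro h
  have h1 : ‖x * q ^ k‖ = 1 := by
    rw [eq_neg_of_add_eq_zero_right h, norm_neg, norm_one]
  rw [norm_mul, norm_pow] at h1
  have := pow_le_one₀ (norm_nonneg q) hq.le (n := k)
  nlinarith [norm_nonneg x]

lemma qProd_ne_zero {q x : ℂ} (hq : ‖q‖ < 1) (hx : ‖x‖ < 1) : qProd x q ≠ 0 :=
  tprod_one_add_ne_zero_of_summable (one_add_mul_pow_ne_zero hq hx) (summable_norm_mul_pow hq x)

lemma qProd_eq_one_add_mul {q : ℂ} (hq : ‖q‖ < 1) (x : ℂ) :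
    qProd x q = (1 + x) * qProd (x * q) q := by
  refine tendsto_nhds_unique ((tendsto_qProd hq x).comp (tendsto_add_atTop_nat 1)) ?_
  refine ((tendsto_qProd hq (x * q)).const_mul (1 + x)).congr fun N ↦ ?_
  simp only [Function.comp, prod_range_succ', pow_succ', pow_zero, mul_one, mul_assoc]
  ring

/-- Splitting a `q`-product by residue classes modulo `m`. -/
lemma prod_qProd_pow {q : ℂ} (hq : ‖q‖ < 1) (x : ℂ) {m : ℕ} (hm : m ≠ 0) :
    ∏ j ∈ range m, qProd (x * q ^ j) (q ^ m) = qProd x q := by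
  have hqm := norm_pow_lt_one hq (m := m) hm
  have h1 := tendsto_finsetProd (range m) fun j _ ↦ tendsto_qProd hqm (x * q ^ j)
  have h2 := (tendsto_qProd hq x).comp (tendsto_id.const_mul_atTop' (Nat.pos_of_ne_zero hm))
  refine tendsto_nhds_unique h1 (h2.congr fun N ↦ ?_)
  simp only [Function.comp, id]
  rw [Finset.prod_comm]
  induction N with
  | zero => simp
  | succ N ih =>
    rw [mul_add, mul_one, prod_range_add, ih, prod_range_succ]
    congr 1
    refine prod_congr rfl fun j _ ↦ ?_
    rw [← pow_mul, mul_assoc, ← pow_add, add_comm (m * N)]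

lemma qProd_mul_qProd_neg {q : ℂ} (hq : ‖q‖ < 1) (x : ℂ) :
    qProd x q * qProd (-x) q = qProd (-x ^ 2) (q ^ 2) := by
  have hq2 := norm_pow_lt_one hq (m := 2) two_ne_zero
  refine tendsto_nhds_unique ((tendsto_qProd hq x).mul (tendsto_qProd hq (-x)))
    ((tendsto_qProd hq2 (-x ^ 2)).congr fun N ↦ ?_)
  rw [← prod_mul_distrib]
  exact prod_congr rfl fun k _ ↦ by ring

lemma prod_one_add_mul_rootOfUnity {ζ : ℂ} (hζ : 1 + ζ + ζ ^ 2 + ζ ^ 3 + ζ ^ 4 = 0) (y : ℂ) :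
    (1 + y) * (1 + ζ * y) * (1 + ζ ^ 2 * y) * (1 + ζ ^ 3 * y) * (1 + ζ ^ 4 * y) = 1 + y ^ 5 := by
  have h5 : ζ ^ 5 = 1 := by linear_combination (ζ - 1) * hζ
  have h4 : ζ ^ 4 = -1 - ζ - ζ ^ 2 - ζ ^ 3 := by linear_combination hζ
  grind

lemma prod_qProd_rootOfUnity {q : ℂ} (hq : ‖q‖ < 1) {ζ : ℂ}
    (hζ : 1 + ζ + ζ ^ 2 + ζ ^ 3 + ζ ^ 4 = 0) (x : ℂ) :
    qProd x q * qProd (ζ * x) q * qProd (ζ ^ 2 * x) q * qProd (ζ ^ 3 * x) q * qProd (ζ ^ 4 * x) q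
      = qProd (x ^ 5) (q ^ 5) := by
  have hq5 := norm_pow_lt_one hq (m := 5) (by norm_num)
  refine tendsto_nhds_unique (((((tendsto_qProd hq x).mul (tendsto_qProd hq _)).mul
    (tendsto_qProd hq _)).mul (tendsto_qProd hq _)).mul (tendsto_qProd hq _))
    ((tendsto_qProd hq5 (x ^ 5)).congr fun N ↦ ?_)
  simp only [← prod_mul_distrib]
  refine prod_congr rfl fun k _ ↦ ?_
  rw [← pow_mul, mul_comm 5 k, pow_mul, ← mul_pow, ← prod_one_add_mul_rootOfUnity hζ]
  ring

/-- The reciprocal of the finite `q`-factorial `(q; q)_m`, extended by zero to `m < 0`. -/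
noncomputable def invFactorial (q : ℂ) (m : ℤ) : ℂ :=
  if m < 0 then 0 else (∏ k ∈ range m.toNat, (1 + -q * q ^ k))⁻¹

lemma one_sub_zpow_mul_invFactorial {q : ℂ} (hq : ‖q‖ < 1) (m : ℤ) :
    (1 - q ^ m) * invFactorial q m = invFactorial q (m - 1) := by
  rcases lt_trichotomy m 0 with hm | rfl | hm
  · simp [invFactorial, hm, hm.trans zero_lt_one]
  · simp [invFactorial]
  · obtain ⟨n, rfl⟩ : ∃ n : ℕ, m = n + 1 := ⟨(m - 1).toNat, by omega⟩
    have h := one_add_mul_pow_ne_zero hq (x := -q) (by simpa using hq) n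
    have h1 : ¬ (n : ℤ) + 1 < 0 := by omega
    have h2 : ((n : ℤ) + 1).toNat = n + 1 := by omega
    have h3 : 1 - q ^ ((n : ℤ) + 1) = 1 + -q * q ^ n := by
      rw [← Nat.cast_succ, zpow_natCast, pow_succ']; ring
    simp only [invFactorial, h1, h2, h3, if_false, add_sub_cancel_right, Int.toNat_natCast,
      prod_range_succ, mul_inv_rev, (Int.natCast_nonneg n).not_gt]
    exact mul_inv_cancel_left₀ h _

lemma tendsto_invFactorial {q : ℂ} (hq : ‖q‖ < 1) :
    Tendsto (invFactorial q) atTop (𝓝 (qProd (-q) q)⁻¹) := by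
  have h := ((tendsto_qProd hq (-q)).inv₀ (qProd_ne_zero hq (by simpa using hq))).comp
    (tendsto_atTop_atTop.2 fun b ↦ ⟨(b : ℤ), fun a ha ↦ by omega⟩ :
      Tendsto Int.toNat atTop atTop)
  refine h.congr' ?_
  filter_upwards [eventually_ge_atTop 0] with m hm
  simp [invFactorial, hm.not_gt]

lemma exists_norm_invFactorial_le {q : ℂ} (hq : ‖q‖ < 1) :
    ∃ C, ∀ m, ‖invFactorial q m‖ ≤ C := by
  have h := (tendsto_invFactorial hq).comp tendsto_natCast_atTop_atTop
  obtain ⟨C, hC⟩ := h.norm.bddAbove_range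
  refine ⟨C, fun m ↦ ?_⟩
  have h0 : 0 ≤ C := (norm_nonneg _).trans (hC ⟨0, rfl⟩)
  by_cases hm : m < 0
  · simpa [invFactorial, hm] using h0
  · lift m to ℕ using not_lt.1 hm
    exact hC ⟨m, rfl⟩

/-- The finite form of the Jacobi triple product identity. -/
lemma hasSum_finite_tripleProduct {q z : ℂ} (hq : ‖q‖ < 1) (hq0 : q ≠ 0) (hz : z ≠ 0) (A B : ℕ) :
    HasSum (fun n : ℤ ↦ invFactorial q (A - n) * invFactorial q (B + n) *
        (q ^ triangular n * z ^ n))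
      (invFactorial q (A + B) * ((∏ k ∈ range A, (1 + z * q * q ^ k)) *
        ∏ k ∈ range B, (1 + z⁻¹ * q ^ k))) := by
  have hne (M : ℕ) : 1 - q ^ ((M : ℤ) + 1) ≠ 0 := by
    have h := one_add_mul_pow_ne_zero hq (x := -q) (by simpa using hq) M
    rw [← Nat.cast_succ, zpow_natCast, pow_succ']
    simpa [sub_eq_add_neg] using h
  induction A with
  | zero =>
    induction B with
    | zero =>
      convert hasSum_single (0 : ℤ) ?_ using 1
      · simp [triangular, invFactorial]
      · intro n hn
        rcases lt_or_gt_of_ne hn with h | h <;> simp [invFactorial, h]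
    | succ B ih =>
      have hs := ih.add (((Equiv.addRight (1 : ℤ)).hasSum_iff.2 ih).mul_left (z⁻¹ * q ^ B))
      have hs' := hs.mul_left (1 - q ^ ((B : ℤ) + 1))⁻¹
      convert hs' using 1
      · rfl
      · ext n
        rw [eq_inv_mul_iff_mul_eq₀ (hne B)]
        have r1 := one_sub_zpow_mul_invFactorial hq (-n)
        have r2 := one_sub_zpow_mul_invFactorial hq (B + 1 + n)
        simp only [Function.comp, Equiv.coe_addRight, Nat.cast_zero, zero_sub, Nat.cast_succ,
          triangular_add_one]
        rw [show -(n + 1) = -n - 1 by ring, show (B : ℤ) + (n + 1) = B + 1 + n by ring, ← r1,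
          show (B : ℤ) + n = B + 1 + n - 1 by ring, ← r2]
        simp only [zpow_add₀ hq0, zpow_add₀ hz, zpow_neg, zpow_one, zpow_natCast]
        field_simp
        ring
      · have r := one_sub_zpow_mul_invFactorial hq ((B : ℤ) + 1)
        rw [add_sub_cancel_right] at r
        rw [eq_inv_mul_iff_mul_eq₀ (hne B), prod_range_succ]
        simp only [Nat.cast_zero, zero_add, Nat.cast_succ]
        rw [← r]
        ring
  | succ A ih =>
    have hs := ih.add (((Equiv.addRight (-1 : ℤ)).hasSum_iff.2 ih).mul_left (z * q ^ (A + 1)))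
    have hs' := hs.mul_left (1 - q ^ (((A + B : ℕ) : ℤ) + 1))⁻¹
    convert hs' using 1
    · rfl
    · ext n
      rw [eq_inv_mul_iff_mul_eq₀ (hne _)]
      obtain ⟨n, rfl⟩ : ∃ m, n = m + 1 := ⟨n - 1, by ring⟩
      have r1 := one_sub_zpow_mul_invFactorial hq (A - n)
      have r2 := one_sub_zpow_mul_invFactorial hq (B + n + 1)
      simp only [Function.comp, Equiv.coe_addRight, Nat.cast_succ, add_neg_cancel_right,
        triangular_add_one]
      rw [show (A : ℤ) + 1 - (n + 1) = A - n by ring, show (B : ℤ) + (n + 1) = B + n + 1 by ring,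
        show (B : ℤ) + n = B + n + 1 - 1 by ring, ← r2,
        show (A : ℤ) - (n + 1) = A - n - 1 by ring, ← r1]
      simp only [zpow_add₀ hq0, zpow_add₀ hz, zpow_sub₀ hq0, zpow_one, zpow_natCast,
        Nat.cast_add, add_sub_cancel_right]
      field_simp
      ring
    · have r := one_sub_zpow_mul_invFactorial hq ((A : ℤ) + B + 1)
      rw [add_sub_cancel_right] at r
      rw [eq_inv_mul_iff_mul_eq₀ (hne _), prod_range_succ]
      simp only [Nat.cast_add, Nat.cast_succ]
      rw [← r, show (A : ℤ) + 1 + B = A + B + 1 by ring]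
      ring

lemma summable_norm_pow_triangular_nat {q : ℂ} (hq : ‖q‖ < 1) (hq0 : q ≠ 0) {z : ℂ} (hz : z ≠ 0) :
    Summable fun n : ℕ ↦ ‖q ^ triangular n * z ^ n‖ := by
  refine summable_of_ratio_test_tendsto_lt_one (l := 0) zero_lt_one
    (Eventually.of_forall fun n ↦ by simp [hq0, hz, zpow_ne_zero]) ?_
  have h : Tendsto (fun n : ℕ ↦ ‖q‖ ^ (n + 1) * ‖z‖) atTop (𝓝 0) := by
    simpa using ((tendsto_pow_atTop_nhds_zero_of_lt_one (norm_nonneg q) hq).comp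
      (tendsto_add_atTop_nat 1)).mul_const ‖z‖
  refine h.congr fun n ↦ ?_
  have hq' := norm_ne_zero_iff.2 hq0
  have hz' := norm_ne_zero_iff.2 hz
  have ht := zpow_ne_zero (triangular n) hq'
  rw [Nat.cast_succ, triangular_add_one]
  simp only [norm_norm, norm_mul, norm_zpow, norm_pow, zpow_add₀ hq', zpow_natCast, zpow_one]
  field_simp
  ring

lemma summable_norm_theta {q : ℂ} (hq : ‖q‖ < 1) (hq0 : q ≠ 0) {z : ℂ} (hz : z ≠ 0) :
    Summable fun n : ℤ ↦ ‖q ^ triangular n * z ^ n‖ := by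
  refine Summable.of_nat_of_neg_add_one
    (by simpa using summable_norm_pow_triangular_nat hq hq0 hz) ?_
  refine ((summable_norm_pow_triangular_nat hq hq0 (inv_ne_zero hz)).mul_left ‖z⁻¹‖).congr
    fun n ↦ ?_
  rw [triangular_neg_add_one, ← norm_mul, zpow_neg, ← Nat.cast_succ, zpow_natCast, pow_succ,
    inv_pow, mul_inv]
  congr 1
  ring

/-- The theta series `∑ q ^ (n (n + 1) / 2) z ^ n`. -/
noncomputable def theta (q z : ℂ) : ℂ := ∑' n : ℤ, q ^ triangular n * z ^ n

/-- The **Jacobi triple product identity**. -/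
theorem theta_eq_qProd {q z : ℂ} (hq : ‖q‖ < 1) (hq0 : q ≠ 0) (hz : z ≠ 0) :
    theta q z = qProd (-q) q * (qProd (z * q) q * qProd z⁻¹ q) := by
  obtain ⟨C, hC⟩ := exists_norm_invFactorial_le hq
  have hP := qProd_ne_zero hq (x := -q) (by simpa using hq)
  have hR := tendsto_invFactorial hq
  set P := qProd (-q) q
  have hN : Tendsto (fun N : ℕ ↦ (N : ℤ)) atTop atTop := tendsto_natCast_atTop_atTop
  have hsum : Tendsto (fun N : ℕ ↦ ∑' n : ℤ, invFactorial q (N - n) * invFactorial q (N + n) *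
      (q ^ triangular n * z ^ n)) atTop
      (𝓝 (∑' n : ℤ, P⁻¹ * P⁻¹ * (q ^ triangular n * z ^ n))) := by
    refine tendsto_tsum_of_dominated_convergence
      (bound := fun n ↦ C * C * ‖q ^ triangular n * z ^ n‖)
      ((summable_norm_theta hq hq0 hz).mul_left _) (fun n ↦ ?_)
      (Eventually.of_forall fun N n ↦ ?_)
    · exact ((hR.comp (tendsto_atTop_add_const_right _ (-n) hN)).mul
        (hR.comp (tendsto_atTop_add_const_right _ n hN))).mul_const _
    · rw [norm_mul, norm_mul]
      have := (norm_nonneg _).trans (hC 0)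
      gcongr <;> exact hC _
  have hprod := (hR.comp (hN.atTop_add_atTop hN)).mul
    ((tendsto_qProd hq (z * q)).mul (tendsto_qProd hq z⁻¹))
  have key := tendsto_nhds_unique hsum
    (hprod.congr fun N ↦ (hasSum_finite_tripleProduct hq hq0 hz N N).tsum_eq.symm)
  rw [tsum_mul_left] at key
  change P⁻¹ * P⁻¹ * theta q z = _ at key
  rw [← mul_right_inj' (inv_ne_zero hP), ← mul_right_inj' (inv_ne_zero hP), ← mul_assoc, key,
    inv_mul_cancel_left₀ hP]

/-- The lattice `ℤ²` decomposed into the cosets of its index-five sublattice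
`{(2a - b, a + 2b)}`. -/
def cosetEquiv : Fin 5 × (ℤ × ℤ) ≃ ℤ × ℤ where
  toFun p := (2 * p.2.1 - p.2.2 + (p.1 : ℕ), p.2.1 + 2 * p.2.2)
  invFun p := (⟨((p.1 - 2 * p.2) % 5).toNat, by omega⟩,
    (p.2 + 2 * ((p.1 - 2 * p.2) / 5), -((p.1 - 2 * p.2) / 5)))
  left_inv := by
    rintro ⟨⟨j, hj⟩, a, b⟩
    simp only [Prod.mk.injEq, Fin.mk.injEq]
    omega
  right_inv := by
    rintro ⟨u, v⟩
    simp only [Prod.mk.injEq]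
    omega

/-- The sum of `q ^ (u (u + 1) / 2 + v (v + 1) / 2)` over a coset of `{(2a - b, a + 2b)}`. -/
noncomputable def cosetSum (q : ℂ) (j : ℤ) : ℂ :=
  ∑' p : ℤ × ℤ, q ^ (triangular (2 * p.1 - p.2 + j) + triangular (p.1 + 2 * p.2))

lemma theta_mul_theta_eq_sum_cosetSum {q ζ : ℂ} (hq : ‖q‖ < 1) (hq0 : q ≠ 0) (hζ : ζ ^ 5 = 1) :
    theta q ζ * theta q (ζ ^ 2)⁻¹ = ∑ j : Fin 5, ζ ^ (j : ℕ) * cosetSum q (j : ℕ) := by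
  have hζ0 : ζ ≠ 0 := by
    rintro rfl
    norm_num at hζ
  have h1 := summable_norm_theta hq hq0 hζ0
  have h2 := summable_norm_theta hq hq0 (inv_ne_zero (pow_ne_zero 2 hζ0))
  have hs := summable_mul_of_summable_norm h1 h2
  rw [theta, theta, tsum_mul_tsum_of_summable_norm h1 h2, ← cosetEquiv.tsum_eq]
  refine (Summable.tsum_prod (cosetEquiv.summable_iff.2 hs)).trans ?_
  rw [tsum_fintype]
  refine sum_congr rfl fun j _ ↦ ?_
  rw [cosetSum, ← tsum_mul_left]
  refine tsum_congr fun ⟨a, b⟩ ↦ ?_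
  have h5 : (ζ ^ (b * 5) : ℂ) = 1 := by
    rw [mul_comm, zpow_mul, show (ζ ^ (5 : ℤ) : ℂ) = 1 by exact_mod_cast hζ, one_zpow]
  have hz : ζ ^ (2 * a - b + (j : ℕ) : ℤ) * (ζ ^ 2)⁻¹ ^ (a + 2 * b) = ζ ^ (j : ℕ) := by
    rw [← zpow_natCast ζ 2, ← zpow_neg, ← zpow_mul, ← zpow_add₀ hζ0,
      show 2 * a - b + (j : ℕ) + -((2 : ℕ) : ℤ) * (a + 2 * b) = (j : ℕ) + -(b * 5) by
        push_cast; ring, zpow_add₀ hζ0, zpow_neg, h5, inv_one, mul_one, zpow_natCast]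
  simp only [cosetEquiv, Function.comp, Equiv.coe_fn_mk]
  rw [zpow_add₀ hq0, ← hz]
  ring

lemma cosetSum_congr (q : ℂ) {i j : ℤ} (e : ℤ × ℤ ≃ ℤ × ℤ)
    (h : ∀ p : ℤ × ℤ, (2 * (e p).1 - (e p).2 + i) * (2 * (e p).1 - (e p).2 + i + 1) +
        ((e p).1 + 2 * (e p).2) * ((e p).1 + 2 * (e p).2 + 1) =
      (2 * p.1 - p.2 + j) * (2 * p.1 - p.2 + j + 1) + (p.1 + 2 * p.2) * (p.1 + 2 * p.2 + 1)) :
    cosetSum q i = cosetSum q j := by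
  rw [cosetSum, ← e.tsum_eq, cosetSum]
  refine tsum_congr fun p ↦ ?_
  congr 1
  have := h p
  simp only [← two_mul_triangular] at this
  linarith

lemma cosetSum_one (q : ℂ) : cosetSum q 1 = cosetSum q 0 :=
  cosetSum_congr q ⟨fun p ↦ (-p.1 - 1, -p.2), fun p ↦ (-p.1 - 1, -p.2),
    fun p ↦ by ext <;> simp, fun p ↦ by ext <;> simp⟩ fun p ↦ by simp only [Equiv.coe_fn_mk]; ring

lemma cosetSum_two (q : ℂ) : cosetSum q 2 = cosetSum q 0 :=
  cosetSum_congr q ⟨fun p ↦ (p.2 - 1, -p.1), fun p ↦ (-p.2, p.1 + 1),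
    fun p ↦ by ext <;> simp, fun p ↦ by ext <;> simp⟩ fun p ↦ by simp only [Equiv.coe_fn_mk]; ring

lemma cosetSum_four (q : ℂ) : cosetSum q 4 = cosetSum q 0 :=
  cosetSum_congr q ⟨fun p ↦ (-p.2 - 2, p.1 + 1), fun p ↦ (p.2 - 1, -p.1 - 2),
    fun p ↦ by ext <;> simp, fun p ↦ by ext <;> simp⟩ fun p ↦ by simp only [Equiv.coe_fn_mk]; ring

lemma cosetSum_zero {q : ℂ} (hq : ‖q‖ < 1) (hq0 : q ≠ 0) :
    cosetSum q 0 = theta (q ^ 5) q⁻¹ * theta (q ^ 5) (q ^ 2)⁻¹ := by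
  have hq5 := norm_pow_lt_one hq (m := 5) (by norm_num)
  have h0 := pow_ne_zero 5 hq0
  rw [theta, theta, tsum_mul_tsum_of_summable_norm
    (summable_norm_theta hq5 h0 (inv_ne_zero hq0))
    (summable_norm_theta hq5 h0 (inv_ne_zero (pow_ne_zero 2 hq0))), cosetSum]
  refine tsum_congr fun ⟨a, b⟩ ↦ ?_
  simp only [← zpow_natCast q, ← zpow_mul, ← zpow_neg_one, ← zpow_add₀ hq0]
  congr 1
  have h1 := two_mul_triangular (2 * a - b + 0)
  have h2 := two_mul_triangular (a + 2 * b)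
  have h3 := two_mul_triangular a
  have h4 := two_mul_triangular b
  push_cast
  linarith

lemma cosetSum_three {q : ℂ} (hq : ‖q‖ < 1) (hq0 : q ≠ 0) :
    cosetSum q 3 = q * (theta (q ^ 5) 1 * theta (q ^ 5) 1) := by
  have hs := summable_norm_theta (norm_pow_lt_one hq (m := 5) (by norm_num))
    (pow_ne_zero 5 hq0) one_ne_zero
  rw [theta, tsum_mul_tsum_of_summable_norm hs hs, cosetSum, ← tsum_mul_left,
    ← (Equiv.addRight ((-1, 1) : ℤ × ℤ)).tsum_eq]
  refine tsum_congr fun ⟨a, b⟩ ↦ ?_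
  simp only [Equiv.coe_addRight, Prod.mk_add_mk, one_zpow, mul_one]
  nth_rw 2 [← zpow_one q]
  simp only [← zpow_natCast q, ← zpow_mul, ← zpow_add₀ hq0]
  congr 1
  have h1 := two_mul_triangular (2 * (a + -1) - (b + 1) + 3)
  have h2 := two_mul_triangular (a + -1 + 2 * (b + 1))
  have h3 := two_mul_triangular a
  have h4 := two_mul_triangular b
  push_cast
  linarith

lemma qProd_neg_mul_qProd {q : ℂ} (hq : ‖q‖ < 1) :
    qProd (-q) q * qProd q q = qProd (-q ^ 2) (q ^ 2) := by
  rw [mul_comm, qProd_mul_qProd_neg hq]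

lemma theta_one {q : ℂ} (hq : ‖q‖ < 1) (hq0 : q ≠ 0) :
    theta q 1 = 2 * (qProd (-q) q * qProd q q ^ 2) := by
  rw [theta_eq_qProd hq hq0 one_ne_zero, inv_one, qProd_eq_one_add_mul hq 1, one_mul]
  ring

lemma cosetSum_zero_mul_qProd {q : ℂ} (hq : ‖q‖ < 1) (hq0 : q ≠ 0) :
    cosetSum q 0 * qProd (q ^ 5) (q ^ 5) = qProd (-q ^ 5) (q ^ 5) ^ 2 * qProd q q := by
  have hq5 := norm_pow_lt_one hq (m := 5) (by norm_num)
  have h0 := pow_ne_zero 5 hq0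
  have hp := prod_qProd_pow hq q (m := 5) (by norm_num)
  simp only [prod_range_succ, prod_range_zero, one_mul, ← pow_succ', zero_add, pow_one] at hp
  rw [cosetSum_zero hq hq0, theta_eq_qProd hq5 h0 (inv_ne_zero hq0),
    theta_eq_qProd hq5 h0 (inv_ne_zero (pow_ne_zero 2 hq0)), ← hp, inv_inv, inv_inv,
    show q⁻¹ * q ^ 5 = q ^ 4 by field_simp, show (q ^ 2)⁻¹ * q ^ 5 = q ^ 3 by field_simp]
  ring

lemma exists_fifth_rootOfUnity : ∃ ζ : ℂ, 1 + ζ + ζ ^ 2 + ζ ^ 3 + ζ ^ 4 = 0 := by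
  have h := (Complex.isPrimitiveRoot_exp 5 (by norm_num)).geom_sum_eq_zero (by norm_num)
  exact ⟨_, by simpa only [sum_range_succ, sum_range_zero, zero_add, pow_zero, pow_one] using h⟩

lemma theta_one_sq {q : ℂ} (hq : ‖q‖ < 1) (hq0 : q ≠ 0) :
    theta q 1 ^ 2 = 4 * cosetSum q 0 + cosetSum q 3 := by
  have h := theta_mul_theta_eq_sum_cosetSum hq hq0 (ζ := 1) (one_pow 5)
  simp only [Fin.sum_univ_five, one_pow, inv_one, one_mul] at h
  have e := And.intro (cosetSum_one q) (And.intro (cosetSum_two q) (cosetSum_four q))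
  norm_num at h
  rw [e.1, e.2.1, e.2.2] at h
  linear_combination h

lemma cosetSum_zero_sub_three_mul_qProd {q : ℂ} (hq : ‖q‖ < 1) (hq0 : q ≠ 0) :
    (cosetSum q 0 - cosetSum q 3) * qProd q q =
      qProd (-q) q ^ 2 * qProd (q ^ 5) (q ^ 5) := by
  obtain ⟨ζ, hζ⟩ := exists_fifth_rootOfUnity
  have h5 : ζ ^ 5 = 1 := by linear_combination (ζ - 1) * hζ
  have hζ0 : ζ ≠ 0 := by
    rintro rfl
    norm_num at h5
  have h := theta_mul_theta_eq_sum_cosetSum hq hq0 h5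
  simp only [Fin.sum_univ_five] at h
  norm_num at h
  rw [cosetSum_one, cosetSum_two, cosetSum_four,
    theta_eq_qProd hq hq0 hζ0, theta_eq_qProd hq hq0 (inv_ne_zero (pow_ne_zero 2 hζ0)),
    inv_inv, show ζ⁻¹ = ζ ^ 4 from inv_eq_of_mul_eq_one_right (by rw [← h5]; ring),
    show (ζ ^ 2)⁻¹ = ζ ^ 3 from inv_eq_of_mul_eq_one_right (by rw [← h5]; ring),
    qProd_eq_one_add_mul hq (ζ ^ 4),
    qProd_eq_one_add_mul hq (ζ ^ 2)] at h
  rw [← prod_qProd_rootOfUnity hq hζ q]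
  refine mul_left_cancel₀ (pow_ne_zero 3 hζ0) ?_
  linear_combination qProd q q * h + qProd q q * cosetSum q 0 * hζ -
    qProd (-q) q ^ 2 * (qProd q q * qProd (ζ * q) q * qProd (ζ ^ 2 * q) q * qProd (ζ ^ 3 * q) q *
      qProd (ζ ^ 4 * q) q) * (hζ + ζ * h5)

lemma theta_neg_inv_sq {q : ℂ} (hq : ‖q‖ < 1) (hq0 : q ≠ 0) :
    theta (q ^ 3) (-(q ^ 2)⁻¹) = qProd (-q) q := by
  have hp := prod_qProd_pow hq (-q) (m := 3) (by norm_num)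
  simp only [prod_range_succ, prod_range_zero, one_mul, pow_zero, mul_one] at hp
  rw [theta_eq_qProd (norm_pow_lt_one hq (by norm_num)) (pow_ne_zero 3 hq0)
    (neg_ne_zero.2 (inv_ne_zero (pow_ne_zero 2 hq0))), ← hp, inv_neg, inv_inv,
    show -(q ^ 2)⁻¹ * q ^ 3 = -q by field_simp, show -q * q ^ 1 = -q ^ 2 by ring,
    show -q * q ^ 2 = -q ^ 3 by ring]
  ring

lemma ofReal_fneg {q : ℝ} (hq : |q| < 1) (hq0 : q ≠ 0) :
    (fneg q : ℂ) = qProd (-q) q := by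
  have hq0' : (q : ℂ) ≠ 0 := by exact_mod_cast hq0
  rw [← theta_neg_inv_sq (by simpa using hq) hq0', fneg, Complex.ofReal_tsum, theta]
  refine tsum_congr fun n ↦ ?_
  push_cast
  rw [neg_eq_neg_one_mul ((q : ℂ) ^ 2)⁻¹, mul_zpow, mul_left_comm, ← zpow_natCast (q : ℂ) 3,
    ← zpow_natCast (q : ℂ) 2, ← zpow_neg, ← zpow_mul, ← zpow_mul, ← zpow_add₀ hq0']
  congr 2
  have h1 : 2 * (n * (3 * n - 1) / 2) = n * (3 * n - 1) :=
    Int.two_mul_ediv_two_of_even (by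
      rcases Int.even_or_odd n with h | h
      · exact h.mul_right _
      · exact ((Odd.mul (by decide) h).sub_odd odd_one).mul_left _)
  have h2 := two_mul_triangular n
  push_cast
  linarith

lemma two_mul_ofReal_psi {q : ℝ} (hq : |q| < 1) (hq0 : q ≠ 0) :
    2 * (psi q : ℂ) = theta q 1 := by
  have hq0' : (q : ℂ) ≠ 0 := by exact_mod_cast hq0
  have hs := summable_norm_pow_triangular_nat (q := q) (by simpa using hq) hq0' one_ne_zero
  have hs' := hs.of_norm
  simp only [one_pow, mul_one] at hs'
  have hpsi : (psi q : ℂ) = ∑' n : ℕ, (q : ℂ) ^ triangular n := by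
    rw [psi, Complex.ofReal_tsum]
    refine tsum_congr fun n ↦ ?_
    rw [Complex.ofReal_pow, ← zpow_natCast, triangular]
    push_cast
    rfl
  rw [theta, tsum_of_nat_of_neg_add_one]
  · simp only [one_zpow, mul_one, triangular_neg_add_one]
    rw [hpsi]
    ring
  · simpa using hs'
  · simpa only [triangular_neg_add_one, one_zpow, mul_one] using hs'

lemma abs_pow_lt_one {q : ℝ} (hq : |q| < 1) {m : ℕ} (hm : m ≠ 0) : |q ^ m| < 1 := by
  rw [abs_pow]
  exact pow_lt_one₀ (abs_nonneg q) hq hm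

lemma ofReal_psi {q : ℝ} (hq : |q| < 1) (hq0 : q ≠ 0) :
    (psi q : ℂ) = qProd (-q) q * qProd q q ^ 2 := by
  have h := two_mul_ofReal_psi hq hq0
  rw [theta_one (by simpa using hq) (by exact_mod_cast hq0)] at h
  exact mul_left_cancel₀ two_ne_zero h

lemma fneg_ne_zero {q : ℝ} (hq : |q| < 1) (hq0 : q ≠ 0) : fneg q ≠ 0 := by
  have h := qProd_ne_zero (q := q) (x := -q) (by simpa using hq) (by simpa using hq)
  rw [← ofReal_fneg hq hq0] at h
  exact_mod_cast h

lemma ofReal_fneg_mul_qProd {q : ℝ} (hq : |q| < 1) (hq0 : q ≠ 0) :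
    (fneg q : ℂ) * qProd q q = fneg (q ^ 2) := by
  rw [ofReal_fneg hq hq0, qProd_neg_mul_qProd (by simpa using hq), ofReal_fneg
    (abs_pow_lt_one hq two_ne_zero) (pow_ne_zero 2 hq0)]
  push_cast
  rfl

lemma psi_eq {q : ℝ} (hq : |q| < 1) (hq0 : q ≠ 0) : psi q = fneg (q ^ 2) ^ 2 / fneg q := by
  have hf := fneg_ne_zero hq hq0
  rw [eq_div_iff hf]
  have h : (psi q : ℂ) * fneg q = (fneg (q ^ 2) : ℂ) ^ 2 := by
    rw [ofReal_psi hq hq0, ← ofReal_fneg_mul_qProd hq hq0, ← ofReal_fneg hq hq0]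
    ring
  exact_mod_cast h

lemma cosetSum_three_eq {q : ℝ} (hq : |q| < 1) (hq0 : q ≠ 0) :
    cosetSum q 3 = 4 * (q * psi (q ^ 5) ^ 2 : ℝ) := by
  have h := two_mul_ofReal_psi (q := q ^ 5)
    (abs_pow_lt_one hq (by norm_num)) (pow_ne_zero 5 hq0)
  rw [cosetSum_three (by simpa using hq) (by exact_mod_cast hq0)]
  push_cast at h ⊢
  rw [← h]
  ring

lemma cosetSum_zero_eq {q : ℝ} (hq : |q| < 1) (hq0 : q ≠ 0) :
    cosetSum q 0 = (psi q ^ 2 - q * psi (q ^ 5) ^ 2 : ℝ) := by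
  have h := theta_one_sq (q := q) (by simpa using hq) (by exact_mod_cast hq0)
  rw [← two_mul_ofReal_psi hq hq0, cosetSum_three_eq hq hq0] at h
  push_cast at h ⊢
  linear_combination -h / 4

theorem psi_sq_sub {q : ℝ} (hq : |q| < 1) (hq0 : q ≠ 0) :
    psi q ^ 2 - q * psi (q ^ 5) ^ 2 =
      fneg (q ^ 2) * fneg (q ^ 5) ^ 3 / (fneg q * fneg (q ^ 10)) := by
  have hq5 := abs_pow_lt_one hq (m := 5) (by norm_num)
  have h0 := pow_ne_zero 5 hq0
  have hq10 := abs_pow_lt_one hq (m := 10) (by norm_num)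
  have h1 := fneg_ne_zero hq hq0
  have h10 := fneg_ne_zero hq10 (pow_ne_zero 10 hq0)
  have h := cosetSum_zero_mul_qProd (q := q) (by simpa using hq) (by exact_mod_cast hq0)
  have m1 := ofReal_fneg_mul_qProd hq hq0
  have m5 := ofReal_fneg_mul_qProd hq5 h0
  have f5 := ofReal_fneg hq5 h0
  rw [cosetSum_zero_eq hq hq0] at h
  rw [← pow_mul] at m5
  norm_num at m5 f5
  rw [← f5] at h
  rw [eq_div_iff (mul_ne_zero h1 h10)]
  have key : ((psi q ^ 2 - q * psi (q ^ 5) ^ 2 : ℝ) : ℂ) * (fneg q * fneg (q ^ 10)) =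
      fneg (q ^ 2) * fneg (q ^ 5) ^ 3 := by
    rw [← m1, ← m5]
    linear_combination (fneg q : ℂ) * fneg (q ^ 5) * h
  exact_mod_cast key

theorem psi_sq_sub_five {q : ℝ} (hq : |q| < 1) (hq0 : q ≠ 0) :
    psi q ^ 2 - 5 * q * psi (q ^ 5) ^ 2 =
      fneg q ^ 3 * fneg (q ^ 10) / (fneg (q ^ 2) * fneg (q ^ 5)) := by
  have hq5 := abs_pow_lt_one hq (m := 5) (by norm_num)
  have h0 := pow_ne_zero 5 hq0
  have hq2 := abs_pow_lt_one hq (m := 2) (by norm_num)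
  have h2 := fneg_ne_zero hq2 (pow_ne_zero 2 hq0)
  have h5 := fneg_ne_zero hq5 h0
  have h := cosetSum_zero_sub_three_mul_qProd (q := q) (by simpa using hq) (by exact_mod_cast hq0)
  have m1 := ofReal_fneg_mul_qProd hq hq0
  have m5 := ofReal_fneg_mul_qProd hq5 h0
  rw [cosetSum_zero_eq hq hq0, cosetSum_three_eq hq hq0, ← ofReal_fneg hq hq0] at h
  rw [← pow_mul] at m5
  norm_num at m5
  rw [eq_div_iff (mul_ne_zero h2 h5)]
  have key : ((psi q ^ 2 - 5 * q * psi (q ^ 5) ^ 2 : ℝ) : ℂ) * (fneg (q ^ 2) * fneg (q ^ 5)) =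
      fneg q ^ 3 * fneg (q ^ 10) := by
    rw [← m1, ← m5]
    push_cast at h ⊢
    linear_combination (fneg q : ℂ) * fneg (q ^ 5) * h
  exact_mod_cast key

end ThetaQuintic

open ThetaQuintic in
theorem stmt_4 (q V : ℝ) (hq0 : 0 < q) (hq1 : q < 1)
    (hV : V = psi q ^ 2 / (q * psi (q ^ 5) ^ 2)) :
    q * fneg q ^ 6 * fneg (q ^ 10) ^ 6 / (fneg (q ^ 2) ^ 6 * fneg (q ^ 5) ^ 6)
      = (V - 5) / (V * (V - 1)) := by
  have hne := hq0.ne'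
  have hq : |q| < 1 := by rwa [abs_of_pos hq0]
  have e1 := fneg_ne_zero hq hne
  have e2 := fneg_ne_zero (abs_pow_lt_one hq (by norm_num)) (pow_ne_zero 2 hne)
  have e5 := fneg_ne_zero (abs_pow_lt_one hq (by norm_num)) (pow_ne_zero 5 hne)
  have e10 := fneg_ne_zero (abs_pow_lt_one hq (by norm_num)) (pow_ne_zero 10 hne)
  have p1 := psi_eq hq hne
  have p5 := psi_eq (abs_pow_lt_one hq (by norm_num)) (pow_ne_zero 5 hne)
  rw [← pow_mul] at p5
  norm_num at p5
  have hp1 : psi q ≠ 0 := by rw [p1]; positivity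
  have hp5 : psi (q ^ 5) ≠ 0 := by rw [p5]; positivity
  have hV1 : V - 1 = (psi q ^ 2 - q * psi (q ^ 5) ^ 2) / (q * psi (q ^ 5) ^ 2) := by
    rw [hV]; field_simp
  have hV5 : V - 5 = (psi q ^ 2 - 5 * q * psi (q ^ 5) ^ 2) / (q * psi (q ^ 5) ^ 2) := by
    rw [hV]; field_simp
  rw [hV1, hV5, hV, psi_sq_sub hq hne, psi_sq_sub_five hq hne, p1, p5]
  field_simp
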